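/- Suppose 𝒮 is primitive, i.e. there exists k₀ ≥ 1 such that 𝒮^{k₀}[Q] ≻ 0 for every Q ⪰ 0 with Q ≠ 0. Then P ∈ (0,∞), and for every Q ⪰ 0 with Q ≠ 0 the bracketing bounds converge to P exponentially fast: writing, for any Hermitian B with 𝒮[B] ≻ 0, σ_B := { t ∈ ℝ : ∃ v ≠ 0, B v = t·𝒮[B] v }, there exist constants C > 0 and r ∈ [0,1) such that for all k ≥ k₀ one has |min σ_{𝒮^k[Q]} − P| ≤ C·r^k and |max σ_{𝒮^k[Q]} − P| ≤ C·r^k. -/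

import Mathlib

open Matrix ComplexOrder ENNReal

noncomputable section

abbrev Mat (N : ℕ) := Matrix (Fin N) (Fin N) ℂ

/-- Real quadratic form `v* A v` (real part). -/
def qf {N : ℕ} (A : Mat N) (v : Fin N → ℂ) : ℝ := (star v ⬝ᵥ A *ᵥ v).re

/-- The congruence map `Q ↦ Lᴴ Q L`. -/
def conjBy {N : ℕ} (L : Mat N) : Mat N →ₗ[ℂ] Mat N where
  toFun Q := Lᴴ * Q * L
  map_add' Q Q' := by simp [Matrix.mul_add, Matrix.add_mul]
  map_smul' a Q := by simp [Matrix.mul_smul, Matrix.smul_mul]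

/-- The operator `𝒮[Q] = 𝒱[(L⁻¹)ᴴ Q L⁻¹]`. -/
def Smap {N : ℕ} (L : Mat N) (V : Mat N →ₗ[ℂ] Mat N) : Module.End ℂ (Mat N) :=
  V ∘ₗ conjBy L⁻¹

/-- `P := sup_{Q ≻ 0} inf_{v ≠ 0} (v* L* Q L v)/(v* 𝒱[Q] v)`, valued in `[0,∞]`,
with the convention that a ratio with zero denominator and positive numerator is `∞`. -/
def Pval {N : ℕ} (L : Mat N) (V : Mat N →ₗ[ℂ] Mat N) : ℝ≥0∞ :=
  ⨆ Q : {Q : Mat N // Q.PosDef}, ⨅ v : {v : Fin N → ℂ // v ≠ 0},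
    ENNReal.ofReal (qf (Lᴴ * Q.1 * L) v.1) / ENNReal.ofReal (qf (V Q.1) v.1)

/-- Spectral radius of a linear endomorphism of matrix space: the largest modulus of an
eigenvalue. -/
def specRad {N : ℕ} (f : Module.End ℂ (Mat N)) : ℝ :=
  sSup {r : ℝ | ∃ μ : ℂ, f.HasEigenvalue μ ∧ r = ‖μ‖}
/-- The generalized spectrum of the pencil `(B, 𝒮[B])`. -/
def genSpec {N : ℕ} (L : Mat N) (V : Mat N →ₗ[ℂ] Mat N) (B : Mat N) : Set ℝ :=
  {t : ℝ | ∃ v : Fin N → ℂ, v ≠ 0 ∧ B *ᵥ v = (t : ℂ) • ((Smap L V) B *ᵥ v)}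

lemma qf_add {N : ℕ} (A B : Mat N) (v : Fin N → ℂ) : qf (A + B) v = qf A v + qf B v := by
  simp [qf, Matrix.add_mulVec]

lemma qf_sub {N : ℕ} (A B : Mat N) (v : Fin N → ℂ) : qf (A - B) v = qf A v - qf B v := by
  simp [qf, Matrix.sub_mulVec]

lemma qf_smul {N : ℕ} (c : ℝ) (A : Mat N) (v : Fin N → ℂ) : qf (c • A) v = c * qf A v := by
  simp [qf, Matrix.smul_mulVec]

lemma qf_sum {N : ℕ} {ι : Type*} (s : Finset ι) (A : ι → Mat N) (v : Fin N → ℂ) :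
    qf (∑ i ∈ s, A i) v = ∑ i ∈ s, qf (A i) v := by
  simp [qf, Matrix.sum_mulVec, dotProduct_sum]

lemma qf_smul_vec {N : ℕ} (c : ℝ) (A : Mat N) (v : Fin N → ℂ) :
    qf A ((c : ℂ) • v) = c ^ 2 * qf A v := by
  simp [qf, Matrix.mulVec_smul]
  ring

lemma qf_one {N : ℕ} (v : Fin N → ℂ) : qf 1 v = ∑ i, ‖v i‖ ^ 2 := by
  simp only [qf, one_mulVec, dotProduct, Complex.re_sum, Pi.star_apply]
  refine Finset.sum_congr rfl fun i _ => ?_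
  rw [← Complex.normSq_eq_norm_sq, Complex.normSq_apply]
  simp

lemma qf_im {N : ℕ} {A : Mat N} (hA : A.IsHermitian) (v : Fin N → ℂ) :
    (star v ⬝ᵥ A *ᵥ v).im = 0 := by
  have := hA.im_star_dotProduct_mulVec_self v
  simpa using this

lemma psd_iff {N : ℕ} (A : Mat N) : A.PosSemidef ↔ A.IsHermitian ∧ ∀ v, 0 ≤ qf A v := by
  rw [posSemidef_iff_dotProduct_mulVec]
  refine and_congr_right fun h => forall_congr' fun v => ?_
  rw [Complex.le_def]
  simp [qf, qf_im h]

lemma pd_iff {N : ℕ} (A : Mat N) : A.PosDef ↔ A.IsHermitian ∧ ∀ v, v ≠ 0 → 0 < qf A v := by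
  rw [posDef_iff_dotProduct_mulVec]
  refine and_congr_right fun h => forall_congr' fun v => ?_
  rw [Complex.lt_def]
  simp [qf, qf_im h]

lemma continuous_qf {N : ℕ} (A : Mat N) : Continuous (qf A) := by
  unfold qf
  fun_prop

def KK (N : ℕ) : Set (Fin N → ℂ) := {v | qf 1 v = 1}

lemma KK_compact (N : ℕ) : IsCompact (KK N) := by
  refine Metric.isCompact_of_isClosed_isBounded ?_ ?_
  · exact isClosed_eq (continuous_qf 1) continuous_const
  · refine (Metric.isBounded_closedBall (x := 0) (r := 1)).subset fun v hv => ?_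
    rw [mem_closedBall_zero_iff, pi_norm_le_iff_of_nonneg zero_le_one]
    intro i
    have h : qf 1 v = 1 := hv
    rw [qf_one] at h
    have := Finset.single_le_sum (f := fun i => ‖v i‖ ^ 2) (fun i _ => sq_nonneg _)
      (Finset.mem_univ i)
    simp only [h] at this
    nlinarith [norm_nonneg (v i)]

lemma qf_one_pos {N : ℕ} {v : Fin N → ℂ} (hv : v ≠ 0) : 0 < qf 1 v :=
  ((pd_iff (1 : Mat N)).1 PosDef.one).2 v hv

lemma KK_ne {N : ℕ} {v : Fin N → ℂ} (hv : v ∈ KK N) : v ≠ 0 := by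
  rintro rfl
  have h : qf 1 (0 : Fin N → ℂ) = 1 := hv
  simp [qf] at h

lemma exists_scale {N : ℕ} {v : Fin N → ℂ} (hv : v ≠ 0) :
    ∃ c : ℝ, 0 < c ∧ ∃ u ∈ KK N, v = (c : ℂ) • u ∧ qf 1 v = c ^ 2 := by
  have h := qf_one_pos hv
  have hc : 0 < Real.sqrt (qf 1 v) := Real.sqrt_pos.2 h
  have hc2 := Real.sq_sqrt h.le
  refine ⟨_, hc, (((Real.sqrt (qf 1 v))⁻¹ : ℝ) : ℂ) • v, ?_, ?_, hc2.symm⟩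
  · change qf 1 _ = 1
    rw [qf_smul_vec, inv_pow, hc2]
    field_simp
  · rw [smul_smul, ← Complex.ofReal_mul, mul_inv_cancel₀ hc.ne']
    simp

lemma KK_nonempty {N : ℕ} (hN : 0 < N) : (KK N).Nonempty := by
  have : (fun _ => 1 : Fin N → ℂ) ≠ 0 := fun h => by
    have := congrFun h ⟨0, hN⟩
    simp at this
  obtain ⟨c, -, u, hu, -⟩ := exists_scale this
  exact ⟨u, hu⟩

lemma isHerm_smul {N : ℕ} {A : Mat N} (hA : A.IsHermitian) (c : ℝ) : (c • A).IsHermitian :=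
  IsSelfAdjoint.smul (IsSelfAdjoint.all c) hA

lemma exists_low {N : ℕ} (hN : 0 < N) {A B : Mat N} (hA : A.IsHermitian) (hB : B.PosDef) :
    ∃ m : ℝ, (A - m • B).PosSemidef ∧ ∃ v, v ≠ 0 ∧ A *ᵥ v = (m : ℂ) • (B *ᵥ v) := by
  have hB' := ((pd_iff B).1 hB).2
  obtain ⟨v, hv, hmin⟩ := (KK_compact N).exists_isMinOn (KK_nonempty hN)
    (f := fun v => qf A v / qf B v)
    ((continuous_qf A).continuousOn.div (continuous_qf B).continuousOn
      fun v hv => (hB' v (KK_ne hv)).ne')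
  have hpsd : (A - (qf A v / qf B v) • B).PosSemidef := by
    rw [psd_iff]
    refine ⟨hA.sub (isHerm_smul hB.1 _), fun w => ?_⟩
    by_cases hw : w = 0
    · simp [hw, qf]
    obtain ⟨c, hc, u, hu, rfl, -⟩ := exists_scale hw
    rw [qf_smul_vec, qf_sub, qf_smul]
    have h1 := hmin hu
    simp only [Set.mem_ofPred_eq] at h1
    rw [le_div_iff₀ (hB' u (KK_ne hu))] at h1
    have : 0 ≤ qf A u - qf A v / qf B v * qf B u := by linarith
    positivity
  refine ⟨_, hpsd, v, KK_ne hv, ?_⟩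
  have h0 : star v ⬝ᵥ (A - (qf A v / qf B v) • B) *ᵥ v = 0 := by
    apply Complex.ext
    · change qf _ v = 0
      rw [qf_sub, qf_smul, div_mul_cancel₀ _ (hB' v (KK_ne hv)).ne', sub_self]
    · exact qf_im hpsd.1 v
  have h1 := (hpsd.dotProduct_mulVec_zero_iff v).1 h0
  rw [sub_mulVec, sub_eq_zero] at h1
  rw [h1, smul_mulVec, Complex.coe_smul]

lemma psd_factor {N : ℕ} {X : Mat N} (hX : X.PosSemidef) :
    ∃ u : Fin N → Fin N → ℂ, X = ∑ k, vecMulVec (u k) (star (u k)) := by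
  open scoped MatrixOrder in
  obtain ⟨Y, hY⟩ := CStarAlgebra.nonneg_iff_eq_star_mul_self.1 hX.nonneg
  refine ⟨fun k => star (Y k), ?_⟩
  rw [hY]
  ext i j
  simp [Matrix.mul_apply, Matrix.sum_apply, vecMulVec_apply, star_eq_conjTranspose]

lemma trace_vv {N : ℕ} (u : Fin N → ℂ) : (vecMulVec u (star u)).trace.re = qf 1 u := by
  rw [trace_vecMulVec, qf, one_mulVec, dotProduct_comm]

lemma uniform {N : ℕ} (hN : 0 < N) (T : Mat N →ₗ[ℂ] Mat N)
    (hT : ∀ Q : Mat N, Q.PosSemidef → Q ≠ 0 → (T Q).PosDef) :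
    ∃ a b : ℝ, 0 < a ∧ a < b ∧ ∀ X : Mat N, X.PosSemidef →
      (T X - (a * X.trace.re) • (1 : Mat N)).PosSemidef ∧
      ((b * X.trace.re) • (1 : Mat N) - T X).PosSemidef := by
  let f : (Fin N → ℂ) × (Fin N → ℂ) → ℝ := fun p => qf (T (vecMulVec p.1 (star p.1))) p.2
  have hTc : Continuous T := LinearMap.continuous_of_finiteDimensional T
  have hf : Continuous f := by
    have : Continuous fun p : (Fin N → ℂ) × (Fin N → ℂ) => T (vecMulVec p.1 (star p.1)) :=
      hTc.comp (by fun_prop)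
    simp only [f, qf]
    fun_prop
  have hKc := (KK_compact N).prod (KK_compact N)
  have hKn := (KK_nonempty hN).prod (KK_nonempty hN)
  obtain ⟨p, hp, hmin⟩ := hKc.exists_isMinOn hKn hf.continuousOn
  obtain ⟨q, hq, hmax⟩ := hKc.exists_isMaxOn hKn hf.continuousOn
  have hTp : ∀ X : Mat N, X.PosSemidef → (T X).PosSemidef := fun X hX => by
    by_cases h : X = 0
    · rw [h, map_zero]; exact PosSemidef.zero
    · exact (hT X hX h).posSemidef
  have hvv : ∀ u : Fin N → ℂ, u ≠ 0 → (T (vecMulVec u (star u))).PosDef := fun u hu =>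
    hT _ (posSemidef_vecMulVec_self_star u) (by simpa using hu)
  have hfp : 0 < f p := ((pd_iff _).1 (hvv p.1 (KK_ne hp.1))).2 p.2 (KK_ne hp.2)
  have hscale : ∀ u v : Fin N → ℂ, f p * qf 1 u * qf 1 v ≤ f (u, v) ∧
      f (u, v) ≤ f q * qf 1 u * qf 1 v := by
    intro u v
    by_cases hu : u = 0
    · simp [hu, f, qf]
    by_cases hv : v = 0
    · simp [hv, f, qf]
    obtain ⟨c, hc, u, hu', rfl, h1⟩ := exists_scale hu
    obtain ⟨d, hd, v, hv', rfl, h2⟩ := exists_scale hv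
    have h3 : f ((c : ℂ) • u, (d : ℂ) • v) = c ^ 2 * d ^ 2 * f (u, v) := by
      have : vecMulVec ((c : ℂ) • u) (star ((c : ℂ) • u)) =
          ((c ^ 2 : ℝ) : ℂ) • vecMulVec u (star u) := by
        ext i j
        simp [vecMulVec_apply]
        ring
      simp only [f]
      rw [qf_smul_vec, this, map_smul, Complex.coe_smul, qf_smul]
      ring
    have h4 := hmin (Set.mk_mem_prod hu' hv')
    have h5 := hmax (Set.mk_mem_prod hu' hv')
    simp only [Set.mem_ofPred_eq] at h4 h5
    rw [h1, h2, h3]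
    have hcd : 0 ≤ c ^ 2 * d ^ 2 := by positivity
    exact ⟨by nlinarith, by nlinarith⟩
  have hpq : f p ≤ f q := hmin hq
  refine ⟨f p, f q + 1, hfp, by linarith, fun X hX => ?_⟩
  obtain ⟨u, hu⟩ := psd_factor hX
  have htr : X.trace.re = ∑ k, qf 1 (u k) := by
    rw [hu, trace_sum, Complex.re_sum]
    exact Finset.sum_congr rfl fun k _ => trace_vv _
  have hTX : ∀ v, qf (T X) v = ∑ k, f (u k, v) := fun v => by
    rw [hu, map_sum, qf_sum]
  have h1H : (1 : Mat N).IsHermitian := isHermitian_one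
  constructor
  · rw [psd_iff]
    refine ⟨(hTp X hX).1.sub (isHerm_smul h1H _), fun v => ?_⟩
    rw [qf_sub, qf_smul, hTX, htr, Finset.mul_sum, Finset.sum_mul, sub_nonneg]
    exact Finset.sum_le_sum fun k _ => (hscale _ _).1
  · rw [psd_iff]
    refine ⟨(isHerm_smul h1H _).sub (hTp X hX).1, fun v => ?_⟩
    rw [qf_sub, qf_smul, hTX, htr, Finset.mul_sum, Finset.sum_mul, sub_nonneg]
    refine Finset.sum_le_sum fun k _ => ((hscale _ _).2.trans ?_)
    have h1 := ((psd_iff (1 : Mat N)).1 PosSemidef.one).2 (u k)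
    have h2 := ((psd_iff (1 : Mat N)).1 PosSemidef.one).2 v
    have := mul_nonneg h1 h2
    nlinarith

lemma qf_of_eig {N : ℕ} {A B : Mat N} {v : Fin N → ℂ} {t : ℝ}
    (h : A *ᵥ v = (t : ℂ) • (B *ᵥ v)) : qf A v = t * qf B v := by
  simp [qf, h]

lemma exists_high {N : ℕ} (hN : 0 < N) {A B : Mat N} (hA : A.IsHermitian) (hB : B.PosDef) :
    ∃ m : ℝ, (m • B - A).PosSemidef ∧ ∃ v, v ≠ 0 ∧ A *ᵥ v = (m : ℂ) • (B *ᵥ v) := by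
  obtain ⟨m, h, v, hv, h2⟩ := exists_low hN hA.neg hB
  refine ⟨-m, ?_, v, hv, ?_⟩
  · convert h using 1
    module
  · rw [neg_mulVec, neg_eq_iff_eq_neg] at h2
    rw [h2]
    simp

lemma genSpec_facts {N : ℕ} (hN : 0 < N) (L : Mat N) (V : Mat N →ₗ[ℂ] Mat N) {B : Mat N}
    (hB : B.IsHermitian) (hSB : (Smap L V B).PosDef) :
    (genSpec L V B).Finite ∧ (genSpec L V B).Nonempty ∧
    sInf (genSpec L V B) ∈ genSpec L V B ∧ sSup (genSpec L V B) ∈ genSpec L V B ∧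
    (B - sInf (genSpec L V B) • Smap L V B).PosSemidef ∧
    (sSup (genSpec L V B) • Smap L V B - B).PosSemidef ∧
    sInf (genSpec L V B) ≤ sSup (genSpec L V B) := by
  obtain ⟨m, hm, v, hv, hmv⟩ := exists_low hN hB hSB
  obtain ⟨M, hM, w, hw, hMw⟩ := exists_high hN hB hSB
  have hpos := ((pd_iff _).1 hSB).2
  have hleast : IsLeast (genSpec L V B) m := by
    refine ⟨⟨v, hv, hmv⟩, ?_⟩
    rintro t ⟨x, hx, hxt⟩
    have h1 := ((psd_iff _).1 hm).2 x
    rw [qf_sub, qf_smul, qf_of_eig hxt, ← sub_mul] at h1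
    have := nonneg_of_mul_nonneg_left h1 (hpos x hx)
    linarith
  have hgreatest : IsGreatest (genSpec L V B) M := by
    refine ⟨⟨w, hw, hMw⟩, ?_⟩
    rintro t ⟨x, hx, hxt⟩
    have h1 := ((psd_iff _).1 hM).2 x
    rw [qf_sub, qf_smul, qf_of_eig hxt, ← sub_mul] at h1
    have := nonneg_of_mul_nonneg_left h1 (hpos x hx)
    linarith
  rw [hleast.csInf_eq, hgreatest.csSup_eq]
  refine ⟨?_, ⟨m, hleast.1⟩, hleast.1, hgreatest.1, hm, hM, hleast.2 hgreatest.1⟩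
  have hfin := (Module.End.finite_hasEigenvalue
    (Matrix.toLin' ((Smap L V B)⁻¹ * B))).preimage (f := fun t : ℝ => (t : ℂ))
    Complex.ofReal_injective.injOn
  refine hfin.subset ?_
  rintro t ⟨x, hx, hxt⟩
  refine Module.End.hasEigenvalue_of_hasEigenvector (x := x) ⟨?_, hx⟩
  rw [Module.End.mem_eigenspace_iff, toLin'_apply, ← mulVec_mulVec, hxt, mulVec_smul, mulVec_mulVec,
    Matrix.nonsing_inv_mul _ ((Matrix.isUnit_iff_isUnit_det _).1 hSB.isUnit), one_mulVec]

lemma half {N : ℕ} {T : Mat N →ₗ[ℂ] Mat N} {a b : ℝ} (ha : 0 < a)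
    (hab : ∀ X : Mat N, X.PosSemidef →
      (T X - (a * X.trace.re) • (1 : Mat N)).PosSemidef ∧
      ((b * X.trace.re) • (1 : Mat N) - T X).PosSemidef)
    {D B : Mat N} (hD : D.PosSemidef) (hB : B.PosSemidef) {v : Fin N → ℂ} (hv : v ≠ 0) {s : ℝ}
    (h : qf (T D) v = s * qf (T B) v) (hp : 0 < qf (T B) v) :
    a * D.trace.re ≤ s * (b * B.trace.re) := by
  have h1 := ((psd_iff _).1 (hab D hD).1).2 v
  have h2 := ((psd_iff _).1 (hab B hB).2).2 v
  rw [qf_sub, qf_smul] at h1 h2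
  have hn := qf_one_pos hv
  have htr : 0 ≤ D.trace.re := (Complex.le_def.1 hD.trace_nonneg).1
  have h3 : 0 ≤ a * D.trace.re * qf 1 v := by positivity
  have hs : 0 ≤ s := by
    refine nonneg_of_mul_nonneg_left ?_ hp
    linarith
  refine le_of_mul_le_mul_right ?_ hn
  nlinarith

lemma contract {N : ℕ} (hN : 0 < N) {T : Mat N →ₗ[ℂ] Mat N} {a b : ℝ} (ha : 0 < a) (hlt : a < b)
    (hab : ∀ X : Mat N, X.PosSemidef →
      (T X - (a * X.trace.re) • (1 : Mat N)).PosSemidef ∧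
      ((b * X.trace.re) • (1 : Mat N) - T X).PosSemidef)
    {A B : Mat N} (hB : B.PosDef) (hTB : (T B).PosDef) {m M m' M' : ℝ}
    (h1 : (A - m • B).PosSemidef) (h2 : (M • B - A).PosSemidef)
    (h3 : ∃ v, v ≠ 0 ∧ T A *ᵥ v = (m' : ℂ) • (T B *ᵥ v))
    (h4 : ∃ v, v ≠ 0 ∧ T A *ᵥ v = (M' : ℂ) • (T B *ᵥ v)) :
    M' - m' ≤ (1 - a / b) * (M - m) := by
  obtain ⟨v, hv, hmv⟩ := h3
  obtain ⟨w, hw, hMw⟩ := h4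
  have hpos := ((pd_iff _).1 hTB).2
  have e1 := half (s := m' - m) ha hab h1 hB.posSemidef hv (by
    rw [map_sub, LinearMap.map_smul_of_tower, qf_sub, qf_smul, qf_of_eig hmv]; ring) (hpos v hv)
  have e2 := half (s := M - M') ha hab h2 hB.posSemidef hw (by
    rw [map_sub, LinearMap.map_smul_of_tower, qf_sub, qf_smul, qf_of_eig hMw]; ring) (hpos w hw)
  haveI : Nonempty (Fin N) := ⟨⟨0, hN⟩⟩
  have htr : 0 < B.trace.re := (Complex.lt_def.1 hB.trace_pos).1
  simp only [trace_sub, trace_smul, Complex.sub_re, Complex.real_smul, Complex.re_ofReal_mul]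
    at e1 e2
  have hb : 0 < b := ha.trans hlt
  have e3 : a * (M - m) * B.trace.re ≤ b * ((M - m) - (M' - m')) * B.trace.re := by linarith
  have e4 := le_of_mul_le_mul_right e3 htr
  have e5 : a / b * (M - m) ≤ (M - m) - (M' - m') := by
    rw [div_mul_eq_mul_div, div_le_iff₀ hb]; linarith
  linarith

lemma bracket {N : ℕ} (hN : 0 < N) {S : Mat N →ₗ[ℂ] Mat N}
    (hS : ∀ X : Mat N, X.PosSemidef → (S X).PosSemidef) {A B : Mat N} (hA : A.PosDef)
    (hB : B.PosDef) {t M : ℝ} (h1 : ∀ v, v ≠ 0 → t * qf (S B) v ≤ qf B v)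
    (h2 : (M • S A - A).PosSemidef) : t ≤ M := by
  obtain ⟨m, hm, v, hv, hmv⟩ := exists_low hN hB.1 hA
  have hAv := ((pd_iff _).1 hA).2 v hv
  have hBv := ((pd_iff _).1 hB).2 v hv
  have e1 := qf_of_eig hmv
  have hm0 : 0 < m := by
    rw [e1] at hBv
    exact pos_of_mul_pos_left hBv hAv.le
  have e2 := ((psd_iff _).1 h2).2 v
  have e3 := ((psd_iff _).1 (hS _ hm)).2 v
  rw [map_sub, LinearMap.map_smul_of_tower] at e3
  rw [qf_sub, qf_smul] at e2 e3
  have e4 := h1 v hv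
  have e5 := ((psd_iff _).1 (hS _ hA.posSemidef)).2 v
  have e6 : 0 < qf (S A) v := by
    rcases e5.lt_or_eq with h | h
    · exact h
    · rw [← h] at e2
      linarith
  by_contra! hlt
  have hM : 0 < M := pos_of_mul_pos_left (by linarith : 0 < M * qf (S A) v) e5
  have ht : 0 < t := hM.trans hlt
  -- t m qf(SA) ≤ t qf(SB) ≤ qf B = m qf A ≤ m M qf (SA)
  have e7 : t * (m * qf (S A) v) ≤ t * qf (S B) v := by
    apply mul_le_mul_of_nonneg_left _ ht.le
    linarith
  have e8 : m * qf A v ≤ m * (M * qf (S A) v) := by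
    apply mul_le_mul_of_nonneg_left _ hm0.le
    linarith
  have e9 : 0 < (t - M) * (m * qf (S A) v) := mul_pos (by linarith) (by positivity)
  nlinarith

lemma Smap_conj {N : ℕ} {L : Mat N} (hL : IsUnit L) (V : Mat N →ₗ[ℂ] Mat N) (Q : Mat N) :
    Smap L V (Lᴴ * Q * L) = V Q := by
  have hd := (Matrix.isUnit_iff_isUnit_det _).1 hL
  have : (L⁻¹)ᴴ * (Lᴴ * Q * L) * L⁻¹ = ((L * L⁻¹)ᴴ) * Q * (L * L⁻¹) := by
    rw [conjTranspose_mul]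
    simp only [Matrix.mul_assoc]
  simp only [Smap, LinearMap.comp_apply, conjBy, LinearMap.coe_mk, AddHom.coe_mk]
  rw [this, Matrix.mul_nonsing_inv _ hd]
  simp

lemma conj_conj {N : ℕ} {L : Mat N} (hL : IsUnit L) (A : Mat N) :
    Lᴴ * ((L⁻¹)ᴴ * A * L⁻¹) * L = A := by
  have hd := (Matrix.isUnit_iff_isUnit_det _).1 hL
  have : Lᴴ * ((L⁻¹)ᴴ * A * L⁻¹) * L = ((L⁻¹ * L)ᴴ) * A * (L⁻¹ * L) := by
    rw [conjTranspose_mul]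
    simp only [Matrix.mul_assoc]
  rw [this, Matrix.nonsing_inv_mul _ hd]
  simp

lemma posDef_conj {N : ℕ} {L : Mat N} (hL : IsUnit L) {A : Mat N} (hA : A.PosDef) :
    (Lᴴ * A * L).PosDef :=
  hA.conjTranspose_mul_mul_same (Matrix.mulVec_injective_of_isUnit hL)

lemma Pval_le {N : ℕ} (hN : 0 < N) {L : Mat N} (hL : IsUnit L) {V : Mat N →ₗ[ℂ] Mat N}
    (hS : ∀ X : Mat N, X.PosSemidef → (Smap L V X).PosSemidef) {A : Mat N} (hA : A.PosDef)
    {M : ℝ} (h : (M • Smap L V A - A).PosSemidef) : Pval L V ≤ ENNReal.ofReal M := by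
  refine iSup_le ?_
  rintro ⟨Q, hQ⟩
  by_contra! hlt
  obtain ⟨t, ht1, ht2⟩ := exists_between hlt
  have htop : t ≠ ⊤ := ht2.ne_top
  have hB := posDef_conj hL hQ
  have : t.toReal ≤ M := by
    refine bracket hN hS hA hB (fun v hv => ?_) h
    rw [Smap_conj hL]
    have h1 := ENNReal.mul_le_of_le_div (ht2.le.trans (iInf_le _ ⟨v, hv⟩))
    dsimp only at h1
    rw [← ENNReal.ofReal_toReal htop, ← ENNReal.ofReal_mul ENNReal.toReal_nonneg] at h1
    exact (ENNReal.ofReal_le_ofReal_iff (((pd_iff _).1 hB).2 v hv).le).1 h1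
  have := ENNReal.ofReal_le_ofReal this
  rw [ENNReal.ofReal_toReal htop] at this
  exact absurd ht1 (not_lt.2 this)

lemma le_Pval {N : ℕ} {L : Mat N} (hL : IsUnit L) {V : Mat N →ₗ[ℂ] Mat N}
    {A : Mat N} (hA : A.PosDef) {m : ℝ} (hm : 0 < m)
    (h : (A - m • Smap L V A).PosSemidef) : ENNReal.ofReal m ≤ Pval L V := by
  have hL' : IsUnit (L⁻¹) := (Matrix.isUnit_nonsing_inv_iff).2 hL
  refine le_iSup_of_le ⟨_, posDef_conj hL' hA⟩ (le_iInf ?_)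
  rintro ⟨v, hv⟩
  dsimp only
  rw [conj_conj hL]
  change _ ≤ _ / ENNReal.ofReal (qf (Smap L V A) v)
  have hp := ((pd_iff _).1 hA).2 v hv
  rw [ENNReal.le_div_iff_mul_le (Or.inr (ENNReal.ofReal_pos.2 hp).ne')
    (Or.inl ENNReal.ofReal_ne_top), ← ENNReal.ofReal_mul hm.le]
  apply ENNReal.ofReal_le_ofReal
  have := ((psd_iff _).1 h).2 v
  rw [qf_sub, qf_smul] at this
  linarith

lemma geom_decay {k₀ : ℕ} (hk₀ : 1 ≤ k₀) {ρ : ℝ} (h0 : 0 < ρ) (h1 : ρ < 1) (w : ℕ → ℝ)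
    (hw : ∀ k, k₀ ≤ k → w (k + k₀) ≤ ρ * w k) :
    ∃ C > (0 : ℝ), ∃ r : ℝ, 0 ≤ r ∧ r < 1 ∧ ∀ k, k₀ ≤ k → w k ≤ C * r ^ k := by
  set r : ℝ := ρ ^ ((k₀ : ℝ)⁻¹) with hr
  have hr0 : 0 < r := Real.rpow_pos_of_pos h0 _
  have hr1 : r < 1 := Real.rpow_lt_one h0.le h1 (by positivity)
  have hrk : r ^ k₀ = ρ := Real.rpow_inv_natCast_pow h0.le (by omega)
  refine ⟨∑ j ∈ Finset.range (2 * k₀), |w j| / r ^ j + 1, ?_, r, hr0.le, hr1, ?_⟩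
  · have : 0 ≤ ∑ j ∈ Finset.range (2 * k₀), |w j| / r ^ j :=
      Finset.sum_nonneg fun j _ => by positivity
    linarith
  set C := ∑ j ∈ Finset.range (2 * k₀), |w j| / r ^ j + 1 with hC
  intro k
  induction k using Nat.strong_induction_on with
  | _ k ih =>
    intro hk
    by_cases h : k < 2 * k₀
    · have := Finset.single_le_sum (f := fun j => |w j| / r ^ j) (fun j _ => by positivity)
        (Finset.mem_range.2 h)
      have h2 : |w k| / r ^ k ≤ C := by
        linarith
      rw [div_le_iff₀ (by positivity)] at h2
      exact (le_abs_self _).trans h2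
    · obtain ⟨j, rfl⟩ : ∃ j, k = j + k₀ := ⟨k - k₀, by omega⟩
      have h2 := ih j (by omega) (by omega)
      calc w (j + k₀) ≤ ρ * w j := hw j (by omega)
        _ ≤ ρ * (C * r ^ j) := mul_le_mul_of_nonneg_left h2 h0.le
        _ = C * r ^ (j + k₀) := by rw [pow_add, hrk]; ring

/-- if `𝒮` is primitive (some power `𝒮^{k₀}` maps nonzero PSD matrices to
positive definite matrices), then `P ∈ (0,∞)` and for every nonzero `Q ⪰ 0` the bracketing
bounds `min σ_{𝒮^k[Q]}` and `max σ_{𝒮^k[Q]}` converge to `P` exponentially fast. -/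
theorem stmt4 {N : ℕ} (hN : 0 < N) (L : Mat N) (hL : IsUnit L)
    (V : Mat N →ₗ[ℂ] Mat N)
    (hVherm : ∀ Q : Mat N, Q.IsHermitian → (V Q).IsHermitian)
    (hVpsd : ∀ Q : Mat N, Q.PosSemidef → (V Q).PosSemidef)
    (k₀ : ℕ) (hk₀ : 1 ≤ k₀)
    (hprim : ∀ Q : Mat N, Q.PosSemidef → Q ≠ 0 → ((Smap L V ^ k₀) Q).PosDef) :
    (0 < Pval L V ∧ Pval L V < ⊤) ∧
    ∀ Q : Mat N, Q.PosSemidef → Q ≠ 0 →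
      ∃ C > (0 : ℝ), ∃ r : ℝ, 0 ≤ r ∧ r < 1 ∧
        ∀ k : ℕ, k₀ ≤ k →
          ((Smap L V ^ (k + 1)) Q).PosDef ∧
          Set.Finite (genSpec L V ((Smap L V ^ k) Q)) ∧
          Set.Nonempty (genSpec L V ((Smap L V ^ k) Q)) ∧
          |sInf (genSpec L V ((Smap L V ^ k) Q)) - (Pval L V).toReal| ≤ C * r ^ k ∧
          |sSup (genSpec L V ((Smap L V ^ k) Q)) - (Pval L V).toReal| ≤ C * r ^ k := by
  classical
  set S := Smap L V with hSdef
  have hS : ∀ X : Mat N, X.PosSemidef → (S X).PosSemidef := fun X hX =>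
    hVpsd _ (hX.conjTranspose_mul_mul_same _)
  have hSk : ∀ (k : ℕ) (X : Mat N), X.PosSemidef → ((S ^ k) X).PosSemidef := by
    intro k
    induction k with
    | zero => intro X hX; simpa using hX
    | succ k ih => intro X hX; rw [pow_succ', Module.End.mul_apply]; exact hS _ (ih X hX)
  haveI : Nonempty (Fin N) := ⟨⟨0, hN⟩⟩
  have hne : ∀ X : Mat N, X.PosDef → X ≠ 0 := by
    rintro X hX rfl
    have := (Complex.lt_def.1 hX.trace_pos).1
    simp at this
  have hnz0 : ∀ X : Mat N, X.PosSemidef → X ≠ 0 → ∀ n : ℕ, (S ^ (k₀ * n)) X ≠ 0 := by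
    intro X hX hX0 n
    induction n with
    | zero => simpa using hX0
    | succ n ih =>
      rw [Nat.mul_succ, add_comm, pow_add, Module.End.mul_apply]
      exact hne _ (hprim _ (hSk _ _ hX) ih)
  have hnz : ∀ X : Mat N, X.PosSemidef → X ≠ 0 → ∀ n : ℕ, (S ^ n) X ≠ 0 := by
    intro X hX hX0 n h
    apply hnz0 X hX hX0 n
    have : k₀ * n = (k₀ * n - n) + n := by
      have : n ≤ k₀ * n := Nat.le_mul_of_pos_left n hk₀
      omega
    rw [this, pow_add, Module.End.mul_apply, h, map_zero]
  have hPD : ∀ X : Mat N, X.PosSemidef → X ≠ 0 → ∀ k, k₀ ≤ k → ((S ^ k) X).PosDef := by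
    intro X hX hX0 k hk
    have : k = k₀ + (k - k₀) := by omega
    rw [this, pow_add, Module.End.mul_apply]
    exact hprim _ (hSk _ _ hX) (hnz X hX hX0 _)
  have hstep : ∀ (X : Mat N) (k : ℕ), S ((S ^ k) X) = (S ^ (k + 1)) X := by
    intro X k
    rw [pow_succ', Module.End.mul_apply]
  have hfacts : ∀ X : Mat N, X.PosSemidef → X ≠ 0 → ∀ k, k₀ ≤ k → _ := fun X hX hX0 k hk =>
    genSpec_facts hN L V (hPD X hX hX0 k hk).1
      (by rw [← hSdef, hstep]; exact hPD X hX hX0 (k + 1) (by omega))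
  have hbr : ∀ X : Mat N, X.PosSemidef → X ≠ 0 → ∀ k, k₀ ≤ k →
      0 < Pval L V ∧ Pval L V < ⊤ ∧
      sInf (genSpec L V ((S ^ k) X)) ≤ (Pval L V).toReal ∧
      (Pval L V).toReal ≤ sSup (genSpec L V ((S ^ k) X)) := by
    intro X hX hX0 k hk
    obtain ⟨-, -, hi, -, hlo, hhi, hle⟩ := hfacts X hX hX0 k hk
    have hA := hPD X hX hX0 k hk
    have hi0 : 0 < sInf (genSpec L V ((S ^ k) X)) := by
      obtain ⟨v, hv, hv2⟩ := hi
      have e := qf_of_eig hv2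
      have e1 := ((pd_iff _).1 hA).2 v hv
      rw [e] at e1
      exact pos_of_mul_pos_left e1 (((psd_iff _).1 (hS _ hA.posSemidef)).2 v)
    have hl := le_Pval hL hA hi0 hlo
    have hu := Pval_le hN hL hS hA hhi
    have htop : Pval L V < ⊤ := hu.trans_lt ENNReal.ofReal_lt_top
    refine ⟨(ENNReal.ofReal_pos.2 hi0).trans_le hl, htop, ?_, ?_⟩
    · exact (ENNReal.ofReal_le_iff_le_toReal htop.ne).1 hl
    · exact ENNReal.toReal_le_of_le_ofReal (hi0.le.trans hle) hu
  constructor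
  · have := hbr 1 PosSemidef.one (hne _ PosDef.one) k₀ le_rfl
    exact ⟨this.1, this.2.1⟩
  intro Q hQ hQ0
  obtain ⟨a, b, ha, hlt, hab⟩ := uniform hN (S ^ k₀) hprim
  have hb : 0 < b := ha.trans hlt
  have hdiv : a / b < 1 := (div_lt_one hb).2 hlt
  have hdiv0 : 0 < a / b := div_pos ha hb
  obtain ⟨C, hC, r, hr0, hr1, hdec⟩ := geom_decay hk₀ (ρ := 1 - a / b) (by linarith) (by linarith)
    (fun k => sSup (genSpec L V ((S ^ k) Q)) - sInf (genSpec L V ((S ^ k) Q))) (by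
      intro k hk
      obtain ⟨-, -, -, -, hlo, hhi, -⟩ := hfacts Q hQ hQ0 k hk
      obtain ⟨-, -, hi, hs, -, -, -⟩ := hfacts Q hQ hQ0 (k + k₀) (by omega)
      rw [← hSdef, hstep] at hlo hhi
      have e1 : (S ^ k₀) ((S ^ k) Q) = (S ^ (k + k₀)) Q := by
        rw [add_comm, pow_add, Module.End.mul_apply]
      have e2 : (S ^ k₀) ((S ^ (k + 1)) Q) = S ((S ^ (k + k₀)) Q) := by
        rw [hstep, show k + k₀ + 1 = k₀ + (k + 1) by omega, pow_add S k₀, Module.End.mul_apply]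
      refine contract hN ha hlt hab (hPD Q hQ hQ0 (k + 1) (by omega)) ?_ hlo hhi ?_ ?_
      · rw [e2, hstep]; exact hPD Q hQ hQ0 _ (by omega)
      · rw [e1, e2]; exact hi
      · rw [e1, e2]; exact hs)
  refine ⟨C, hC, r, hr0, hr1, fun k hk => ?_⟩
  obtain ⟨hfin, hnon, -⟩ := hfacts Q hQ hQ0 k hk
  obtain ⟨-, -, h1, h2⟩ := hbr Q hQ hQ0 k hk
  have h3 := hdec k hk
  refine ⟨hPD Q hQ hQ0 (k + 1) (by omega), hfin, hnon, ?_, ?_⟩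
  · rw [abs_le]; constructor <;> linarith
  · rw [abs_le]; constructor <;> linarith

end
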